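/- arXiv:2307.00684 — 2 statements merged into one kernel-verified Lean document; each statement's English description precedes it below -/
import Mathlib

section
/- (Vanishing successive differences) If α > L, then the sequence {Z^t} generated by the proximal network-slimming iteration satisfies ‖Z^{t+1} − Z^t‖₂ → 0 as t → ∞. -/
noncomputable section

/-- Concatenation `W̃ = (W, γ)` of `W ∈ ℝⁿ` and `γ ∈ ℝᶜ` into a single Euclidean vector. -/
def pairWγ {n c : ℕ} (W : EuclideanSpace ℝ (Fin n)) (γ : EuclideanSpace ℝ (Fin c)) :
    EuclideanSpace ℝ (Fin n ⊕ Fin c) :=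
  (EuclideanSpace.equiv (Fin n ⊕ Fin c) ℝ).symm (Sum.elim (fun i => W i) (fun j => γ j))

/-- Partial gradient `∇_W L̃(W, γ)`. -/
def gradW {n c : ℕ} (Lt : EuclideanSpace ℝ (Fin n ⊕ Fin c) → ℝ)
    (W : EuclideanSpace ℝ (Fin n)) (γ : EuclideanSpace ℝ (Fin c)) : EuclideanSpace ℝ (Fin n) :=
  (EuclideanSpace.equiv (Fin n) ℝ).symm (fun i => gradient Lt (pairWγ W γ) (Sum.inl i))

/-- Partial gradient `∇_γ L̃(W, γ)`. -/
def gradG {n c : ℕ} (Lt : EuclideanSpace ℝ (Fin n ⊕ Fin c) → ℝ)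
    (W : EuclideanSpace ℝ (Fin n)) (γ : EuclideanSpace ℝ (Fin c)) : EuclideanSpace ℝ (Fin c) :=
  (EuclideanSpace.equiv (Fin c) ℝ).symm (fun j => gradient Lt (pairWγ W γ) (Sum.inr j))

/-- Soft-thresholding operator `(S(x, τ))_i = sign(x_i) · max{0, |x_i| − τ}`. -/
def softThresh {c : ℕ} (x : EuclideanSpace ℝ (Fin c)) (τ : ℝ) : EuclideanSpace ℝ (Fin c) :=
  (EuclideanSpace.equiv (Fin c) ℝ).symm (fun i => Real.sign (x i) * max 0 (|x i| - τ))

/-- The objective `F(W, γ, ξ) = L̃(W, γ) + λ‖ξ‖₁ + (β/2)‖γ − ξ‖₂²`. -/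
def objF {n c : ℕ} (Lt : EuclideanSpace ℝ (Fin n ⊕ Fin c) → ℝ) (lam β : ℝ)
    (W : EuclideanSpace ℝ (Fin n)) (γ ξ : EuclideanSpace ℝ (Fin c)) : ℝ :=
  Lt (pairWγ W γ) + lam * (∑ i, |ξ i|) + β / 2 * ‖γ - ξ‖ ^ 2

/-!
The objective `F` is a Lyapunov function: each step decreases it by at least
`(α - L / 2) ‖Z^{t+1} - Z^t‖²`. The `W`- and `γ`-updates minimise the linearisation of `L̃` plus
`(α / 2) ‖· - W̃^t‖²` and the coupling term, so the descent lemma bounds the change of `F` they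
cause; the `ξ`-update is an exact proximal step, controlled by the fact that `x - S(x, τ)` is a
subgradient of `τ ‖·‖₁` at `S(x, τ)`. As `F` is bounded below, the squared differences are summable.
-/

theorem summable_of_add_le_of_bddBelow {F a : ℕ → ℝ} (ha : ∀ t, 0 ≤ a t)
    (hF : BddBelow (Set.range F)) (hdecrease : ∀ t, F (t + 1) + a t ≤ F t) : Summable a := by
  obtain ⟨m, hm⟩ := hF
  refine summable_of_sum_range_le (c := F 0 - m) ha fun N => ?_
  calc ∑ t ∈ Finset.range N, a t
      ≤ ∑ t ∈ Finset.range N, (F t - F (t + 1)) :=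
        Finset.sum_le_sum fun t _ => by linarith [hdecrease t]
    _ = F 0 - F N := Finset.sum_range_sub' F N
    _ ≤ F 0 - m := sub_le_sub_left (hm ⟨N, rfl⟩) _

section Module

variable {𝕜 M : Type*} [Field 𝕜] [AddCommGroup M] [Module 𝕜 M] {a b : 𝕜} {x x' z g : M}

theorem eq_smul_sub_of_eq_sub_smul (ha : a ≠ 0) (h : x' = x - (1 / a) • g) :
    g = a • (x - x') := by
  rw [h, sub_sub_cancel, smul_smul, mul_one_div_cancel ha, one_smul]

theorem eq_smul_sub_add_smul_sub_of_eq_average_sub_smul (hab : a + b ≠ 0)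
    (h : x' = (1 / (a + b)) • (a • x + b • z) - (1 / (a + b)) • g) :
    g = a • (x - x') + b • (z - x') := by
  have hscaled : (a + b) • x' = a • x + b • z - g := by
    rw [h, ← smul_sub, smul_smul, mul_one_div_cancel hab, one_smul]
  calc g = a • x + b • z - (a + b) • x' := by rw [hscaled, sub_sub_cancel]
    _ = a • (x - x') + b • (z - x') := by module

end Module

section InnerProductSpace

variable {E : Type*} [NormedAddCommGroup E] [InnerProductSpace ℝ E]

theorem le_add_inner_gradient_add_sq [CompleteSpace E] {f : E → ℝ} {L : ℝ} {x : E}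
    (hf : Differentiable ℝ f) (hLip : ∀ y, ‖gradient f y - gradient f x‖ ≤ L * ‖y - x‖) (y : E) :
    f y ≤ f x + inner ℝ (gradient f x) (y - x) + L / 2 * ‖y - x‖ ^ 2 := by
  set d := y - x with hd
  have hderiv_segment (t : ℝ) : HasDerivAt (fun t : ℝ => f (x + t • d))
      (inner ℝ (gradient f (x + t • d)) d) t := by
    have hline : HasDerivAt (fun t : ℝ => x + t • d) d t := by
      simpa using ((hasDerivAt_id t).smul_const d).const_add x
    exact ((hf (x + t • d)).hasGradientAt.hasFDerivAt.comp_hasDerivAt t hline).congr_deriv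
      (InnerProductSpace.toDual_apply_apply ..)
  have hderiv_model (t : ℝ) : HasDerivAt
      (fun t : ℝ => f x + t * inner ℝ (gradient f x) d + L / 2 * t ^ 2 * ‖d‖ ^ 2)
      (inner ℝ (gradient f x) d + L * t * ‖d‖ ^ 2) t := by
    have hlinear := ((hasDerivAt_id t).mul_const (inner ℝ (gradient f x) d)).const_add (f x)
    have hquadratic := ((hasDerivAt_pow 2 t).const_mul (L / 2)).mul_const (‖d‖ ^ 2)
    exact (hlinear.add hquadratic).congr_deriv (by push_cast; ring)
  have hderiv_le (t : ℝ) (ht : 0 ≤ t) :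
      inner ℝ (gradient f (x + t • d)) d ≤ inner ℝ (gradient f x) d + L * t * ‖d‖ ^ 2 := by
    rw [← sub_le_iff_le_add', ← inner_sub_left]
    calc inner ℝ (gradient f (x + t • d) - gradient f x) d
        ≤ ‖gradient f (x + t • d) - gradient f x‖ * ‖d‖ := real_inner_le_norm _ _
      _ ≤ L * ‖x + t • d - x‖ * ‖d‖ := by gcongr; exact hLip _
      _ = L * t * ‖d‖ ^ 2 := by
        rw [add_sub_cancel_left, norm_smul, Real.norm_of_nonneg ht]; ring
  have hle := image_le_of_deriv_right_le_deriv_boundary (a := 0) (b := 1)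
    (fun t _ => (hderiv_segment t).continuousAt.continuousWithinAt)
    (fun t _ => (hderiv_segment t).hasDerivWithinAt) (by simp)
    (fun t _ => (hderiv_model t).continuousAt.continuousWithinAt)
    (fun t _ => (hderiv_model t).hasDerivWithinAt)
    (fun t ht => hderiv_le t ht.1) (Set.right_mem_Icc.2 zero_le_one)
  simpa [hd] using hle

theorem half_mul_norm_sub_sq_eq (β : ℝ) (y y' z : E) :
    β / 2 * ‖y - z‖ ^ 2 =
      β / 2 * ‖y' - z‖ ^ 2 + β * inner ℝ (z - y') (y' - y) + β / 2 * ‖y' - y‖ ^ 2 := by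
  have hsplit : y - z = -(z - y') - (y' - y) := by abel
  rw [hsplit, norm_sub_sq_real, inner_neg_left, norm_neg, norm_sub_rev z y']
  ring

end InnerProductSpace

section SoftThreshold

variable {c : ℕ} (x : EuclideanSpace ℝ (Fin c)) {τ : ℝ}

theorem softThresh_apply (τ : ℝ) (i : Fin c) :
    softThresh x τ i = Real.sign (x i) * max 0 (|x i| - τ) := rfl

theorem abs_sub_softThresh_apply_le (hτ : 0 ≤ τ) (i : Fin c) :
    |x i - softThresh x τ i| ≤ τ := by
  rw [softThresh_apply, abs_le]
  rcases lt_trichotomy (x i) 0 with hneg | hzero | hpos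
  · rw [Real.sign_of_neg hneg, abs_of_neg hneg]
    grind
  · simp [hzero, hτ]
  · rw [Real.sign_of_pos hpos, abs_of_pos hpos]
    grind

theorem sub_softThresh_apply_mul_softThresh_apply (τ : ℝ) (i : Fin c) :
    (x i - softThresh x τ i) * softThresh x τ i = τ * |softThresh x τ i| := by
  rw [softThresh_apply]
  rcases le_total (|x i|) τ with hsmall | hlarge
  · simp [max_eq_left (sub_nonpos.2 hsmall)]
  rw [max_eq_right (sub_nonneg.2 hlarge), abs_mul, abs_of_nonneg (sub_nonneg.2 hlarge)]
  rcases lt_trichotomy (x i) 0 with hneg | hzero | hpos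
  · rw [Real.sign_of_neg hneg, abs_of_neg hneg, abs_neg, abs_one]
    ring
  · simp [hzero]
  · rw [Real.sign_of_pos hpos, abs_of_pos hpos, abs_one]
    ring

theorem inner_sub_softThresh_le (hτ : 0 ≤ τ) (u : EuclideanSpace ℝ (Fin c)) :
    inner ℝ (x - softThresh x τ) (u - softThresh x τ) ≤
      τ * ∑ i, |u i| - τ * ∑ i, |softThresh x τ i| := by
  simp only [PiLp.inner_apply, Finset.mul_sum, ← Finset.sum_sub_distrib]
  refine Finset.sum_le_sum fun i _ => ?_
  have hdual : (x i - softThresh x τ i) * u i ≤ τ * |u i| :=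
    calc (x i - softThresh x τ i) * u i
        ≤ |x i - softThresh x τ i| * |u i| := (le_abs_self _).trans (abs_mul _ _).le
      _ ≤ τ * |u i| := by gcongr; exact abs_sub_softThresh_apply_le x hτ i
  calc inner ℝ ((x - softThresh x τ) i) ((u - softThresh x τ) i)
      = (x i - softThresh x τ i) * u i - (x i - softThresh x τ i) * softThresh x τ i := by
        simp only [PiLp.sub_apply, RCLike.inner_apply, conj_trivial]; ring
    _ ≤ τ * |u i| - τ * |softThresh x τ i| := by
        rw [sub_softThresh_apply_mul_softThresh_apply]; gcongr

end SoftThreshold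

section Pair

variable {n c : ℕ}

theorem pairWγ_sub (W W' : EuclideanSpace ℝ (Fin n)) (γ γ' : EuclideanSpace ℝ (Fin c)) :
    pairWγ W γ - pairWγ W' γ' = pairWγ (W - W') (γ - γ') := by
  ext (i | j) <;> rfl

theorem inner_pairWγ (W W' : EuclideanSpace ℝ (Fin n)) (γ γ' : EuclideanSpace ℝ (Fin c)) :
    inner ℝ (pairWγ W γ) (pairWγ W' γ') = inner ℝ W W' + inner ℝ γ γ' := by
  simp [PiLp.inner_apply, pairWγ]

theorem norm_pairWγ_sq (W : EuclideanSpace ℝ (Fin n)) (γ : EuclideanSpace ℝ (Fin c)) :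
    ‖pairWγ W γ‖ ^ 2 = ‖W‖ ^ 2 + ‖γ‖ ^ 2 := by
  simp only [← real_inner_self_eq_norm_sq, inner_pairWγ]

theorem pairWγ_gradW_gradG (Lt : EuclideanSpace ℝ (Fin n ⊕ Fin c) → ℝ)
    (W : EuclideanSpace ℝ (Fin n)) (γ : EuclideanSpace ℝ (Fin c)) :
    pairWγ (gradW Lt W γ) (gradG Lt W γ) = gradient Lt (pairWγ W γ) := by
  ext (i | j) <;> rfl

end Pair

section Slimming

variable {n c : ℕ} {L lam α β : ℝ} {Lt : EuclideanSpace ℝ (Fin n ⊕ Fin c) → ℝ}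
  {W W' : EuclideanSpace ℝ (Fin n)} {γ γ' ξ ξ' : EuclideanSpace ℝ (Fin c)}

theorem bddBelow_range_objF {ι : Type*} (hlam : 0 ≤ lam) (hβ : 0 ≤ β)
    (hbdd : BddBelow (Set.range Lt)) (W : ι → EuclideanSpace ℝ (Fin n))
    (γ ξ : ι → EuclideanSpace ℝ (Fin c)) :
    BddBelow (Set.range fun t => objF Lt lam β (W t) (γ t) (ξ t)) := by
  obtain ⟨m, hm⟩ := hbdd
  refine ⟨m, Set.forall_mem_range.2 fun t => ?_⟩
  calc m ≤ Lt (pairWγ (W t) (γ t)) := hm ⟨_, rfl⟩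
    _ ≤ Lt (pairWγ (W t) (γ t)) + (lam * ∑ i, |ξ t i| + β / 2 * ‖γ t - ξ t‖ ^ 2) :=
        le_add_of_nonneg_right (by positivity)
    _ = objF Lt lam β (W t) (γ t) (ξ t) := (add_assoc _ _ _).symm

theorem objF_gradient_step_le (hα : α ≠ 0) (hαβ : α + β ≠ 0) (hdiff : Differentiable ℝ Lt)
    (hLip : ∀ x y, ‖gradient Lt x - gradient Lt y‖ ≤ L * ‖x - y‖)
    (hW : W' = W - (1 / α) • gradW Lt W γ)
    (hγ : γ' = (1 / (α + β)) • (α • γ + β • ξ) - (1 / (α + β)) • gradG Lt W γ) :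
    objF Lt lam β W' γ' ξ + (α - L / 2) * ‖W' - W‖ ^ 2 + (α + β / 2 - L / 2) * ‖γ' - γ‖ ^ 2 ≤
      objF Lt lam β W γ ξ := by
  have hdescent := le_add_inner_gradient_add_sq hdiff (hLip · (pairWγ W γ)) (pairWγ W' γ')
  rw [← pairWγ_gradW_gradG, pairWγ_sub, inner_pairWγ, norm_pairWγ_sq] at hdescent
  have hinnerW : inner ℝ (gradW Lt W γ) (W' - W) = -α * ‖W' - W‖ ^ 2 := by
    rw [eq_smul_sub_of_eq_sub_smul hα hW, ← neg_sub W' W, smul_neg, inner_neg_left,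
      real_inner_smul_left, real_inner_self_eq_norm_sq, neg_mul]
  have hinnerγ : inner ℝ (gradG Lt W γ) (γ' - γ) =
      -α * ‖γ' - γ‖ ^ 2 + β * inner ℝ (ξ - γ') (γ' - γ) := by
    rw [eq_smul_sub_add_smul_sub_of_eq_average_sub_smul hαβ hγ, ← neg_sub γ' γ, smul_neg,
      inner_add_left, inner_neg_left, real_inner_smul_left, real_inner_smul_left,
      real_inner_self_eq_norm_sq, neg_mul]
  rw [hinnerW, hinnerγ] at hdescent
  unfold objF
  linarith [half_mul_norm_sub_sq_eq β γ γ' ξ]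

theorem objF_softThresh_step_le (hlam : 0 ≤ lam) (hαβ : 0 < α + β)
    (hξ : ξ' = softThresh ((1 / (α + β)) • (α • ξ + β • γ)) (lam / (α + β))) :
    objF Lt lam β W γ ξ' + (α + β / 2) * ‖ξ' - ξ‖ ^ 2 ≤ objF Lt lam β W γ ξ := by
  set v := (1 / (α + β)) • (α • ξ + β • γ) with hv
  have hprox : (α + β) * inner ℝ (v - ξ') (ξ - ξ') ≤ lam * ∑ i, |ξ i| - lam * ∑ i, |ξ' i| := by
    calc (α + β) * inner ℝ (v - ξ') (ξ - ξ')
        ≤ (α + β) * (lam / (α + β) * ∑ i, |ξ i| - lam / (α + β) * ∑ i, |ξ' i|) := by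
          rw [hξ]
          exact mul_le_mul_of_nonneg_left (inner_sub_softThresh_le v (by positivity) ξ) hαβ.le
      _ = lam * ∑ i, |ξ i| - lam * ∑ i, |ξ' i| := by field_simp
  have hresidual : (α + β) • (v - ξ') = α • (ξ - ξ') + β • (γ - ξ') := by
    rw [smul_sub, hv, smul_smul, mul_one_div_cancel hαβ.ne', one_smul]
    module
  have hinner : (α + β) * inner ℝ (v - ξ') (ξ - ξ') =
      α * ‖ξ' - ξ‖ ^ 2 - β * inner ℝ (γ - ξ') (ξ' - ξ) := by
    rw [← real_inner_smul_left, hresidual, inner_add_left, real_inner_smul_left,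
      real_inner_smul_left, real_inner_self_eq_norm_sq, norm_sub_rev, ← neg_sub ξ' ξ,
      inner_neg_right]
    ring
  have hcoupling := half_mul_norm_sub_sq_eq β ξ ξ' γ
  rw [norm_sub_rev ξ γ, norm_sub_rev ξ' γ] at hcoupling
  unfold objF
  linarith

theorem objF_step_le (hL : 0 ≤ L) (hα : 0 < α) (hβ : 0 ≤ β) (hlam : 0 ≤ lam)
    (hdiff : Differentiable ℝ Lt)
    (hLip : ∀ x y, ‖gradient Lt x - gradient Lt y‖ ≤ L * ‖x - y‖)
    (hW : W' = W - (1 / α) • gradW Lt W γ)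
    (hγ : γ' = (1 / (α + β)) • (α • γ + β • ξ) - (1 / (α + β)) • gradG Lt W γ)
    (hξ : ξ' = softThresh ((1 / (α + β)) • (α • ξ + β • γ')) (lam / (α + β))) :
    objF Lt lam β W' γ' ξ' + (α - L / 2) * (‖W' - W‖ ^ 2 + ‖γ' - γ‖ ^ 2 + ‖ξ' - ξ‖ ^ 2) ≤
      objF Lt lam β W γ ξ := by
  have hαβ : 0 < α + β := by positivity
  have hgradient := objF_gradient_step_le (lam := lam) hα.ne' hαβ.ne' hdiff hLip hW hγ
  have hprox := objF_softThresh_step_le (Lt := Lt) (W := W') hlam hαβ hξ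
  have hγ_gain : (α - L / 2) * ‖γ' - γ‖ ^ 2 ≤ (α + β / 2 - L / 2) * ‖γ' - γ‖ ^ 2 := by
    gcongr; linarith
  have hξ_gain : (α - L / 2) * ‖ξ' - ξ‖ ^ 2 ≤ (α + β / 2) * ‖ξ' - ξ‖ ^ 2 := by
    gcongr; linarith
  linarith

theorem vanishing_successive_differences_general
    (hL : 0 ≤ L) (hαL : L < 2 * α) (hβ : 0 ≤ β) (hlam : 0 ≤ lam)
    (hdiff : Differentiable ℝ Lt) (hbdd : BddBelow (Set.range Lt))
    (hLip : ∀ x y, ‖gradient Lt x - gradient Lt y‖ ≤ L * ‖x - y‖)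
    {W : ℕ → EuclideanSpace ℝ (Fin n)} {γ ξ : ℕ → EuclideanSpace ℝ (Fin c)}
    (hW : ∀ t, W (t + 1) = W t - (1 / α) • gradW Lt (W t) (γ t))
    (hγ : ∀ t, γ (t + 1) =
      (1 / (α + β)) • (α • γ t + β • ξ t) - (1 / (α + β)) • gradG Lt (W t) (γ t))
    (hξ : ∀ t, ξ (t + 1) =
      softThresh ((1 / (α + β)) • (α • ξ t + β • γ (t + 1))) (lam / (α + β))) :
    Summable fun t =>
      ‖W (t + 1) - W t‖ ^ 2 + ‖γ (t + 1) - γ t‖ ^ 2 + ‖ξ (t + 1) - ξ t‖ ^ 2 := by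
  have hgain : 0 < α - L / 2 := by linarith
  rw [← summable_mul_left_iff hgain.ne']
  exact summable_of_add_le_of_bddBelow (fun t => by positivity)
    (bddBelow_range_objF hlam hβ hbdd W γ ξ)
    fun t => objF_step_le hL (by linarith) hβ hlam hdiff hLip (hW t) (hγ t) (hξ t)

end Slimming

/-- (Vanishing successive differences.) -/
theorem vanishing_successive_differences
    (n c : ℕ) (hn : 0 < n) (hc : 0 < c)
    (L lam α β : ℝ) (hL : 0 < L) (hlam : 0 < lam) (hα : 0 < α) (hβ : 0 < β)
    (hαL : L < α)
    (Lt : EuclideanSpace ℝ (Fin n ⊕ Fin c) → ℝ)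
    (hdiff : Differentiable ℝ Lt)
    (hnonneg : ∀ x, 0 ≤ Lt x)
    (hLip : ∀ x y, ‖gradient Lt x - gradient Lt y‖ ≤ L * ‖x - y‖)
    (W : ℕ → EuclideanSpace ℝ (Fin n)) (γ ξ : ℕ → EuclideanSpace ℝ (Fin c))
    (hW : ∀ t, W (t + 1) = W t - (1 / α) • gradW Lt (W t) (γ t))
    (hγ : ∀ t, γ (t + 1) =
      (1 / (α + β)) • (α • γ t + β • ξ t) - (1 / (α + β)) • gradG Lt (W t) (γ t))
    (hξ : ∀ t, ξ (t + 1) =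
      softThresh ((1 / (α + β)) • (α • ξ t + β • γ (t + 1))) (lam / (α + β))) :
    Filter.Tendsto
      (fun t : ℕ => Real.sqrt
        (‖W (t + 1) - W t‖ ^ 2 + ‖γ (t + 1) - γ t‖ ^ 2 + ‖ξ (t + 1) - ξ t‖ ^ 2))
      Filter.atTop (nhds 0) := by
  have hsummable := vanishing_successive_differences_general hL.le (by linarith) hβ.le hlam.le hdiff
    ⟨0, Set.forall_mem_range.2 hnonneg⟩ hLip hW hγ hξ
  simpa using hsummable.tendsto_atTop_zero.sqrt
end
end

section
/- (First sufficient descent inequality, step (24)) For every t, the proximal network-slimming iteration satisfies F(W^{t+1}, γ^{t+1}, ξ^t) − F(W^t, γ^t, ξ^t) ≤ ((L − 2α)/2)·(‖W^{t+1} − W^t‖₂² + ‖γ^{t+1} − γ^t‖₂²). -/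
noncomputable section

/-!
A function with `L`-Lipschitz gradient lies below its linearization plus `L / 2` times the squared
displacement, while the quadratic coupling term is equal to its second-order expansion. The update
rules say exactly that the gradient of this model at the old iterate is `-α` times the displacement
in the block `W` and `-(α + β)` times the displacement in the block `γ`; substituting gives the
descent inequality, with `β / 2 * ‖γ' - γ‖ ^ 2` to spare.
-/

open scoped Gradient RealInnerProductSpace

section LipschitzGradient

variable {E E' : Type*} [NormedAddCommGroup E] [InnerProductSpace ℝ E] [CompleteSpace E]
  [NormedAddCommGroup E'] [InnerProductSpace ℝ E'] [CompleteSpace E']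

theorem hasDerivAt_comp_lineMap_of_differentiableAt {f : E → ℝ} {x y : E} {s : ℝ}
    (hf : DifferentiableAt ℝ f (AffineMap.lineMap x y s)) :
    HasDerivAt (fun s : ℝ => f (AffineMap.lineMap x y s))
      ⟪∇ f (AffineMap.lineMap x y s), y - x⟫ s :=
  hf.hasGradientAt.hasFDerivAt.comp_hasDerivAt s AffineMap.hasDerivAt_lineMap

theorem inner_gradient_lineMap_le {f : E → ℝ} {L : ℝ} {x : E}
    (hLip : ∀ z, ‖∇ f z - ∇ f x‖ ≤ L * ‖z - x‖) (y : E) {s : ℝ} (hs : 0 ≤ s) :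
    ⟪∇ f (AffineMap.lineMap x y s), y - x⟫ ≤ ⟪∇ f x, y - x⟫ + L * s * ‖y - x‖ ^ 2 := by
  set z : E := AffineMap.lineMap x y s with hz
  have hzx : ‖z - x‖ = s * ‖y - x‖ := by
    rw [hz, AffineMap.lineMap_apply_module', add_sub_cancel_right, norm_smul,
      Real.norm_of_nonneg hs]
  rw [← sub_le_iff_le_add', ← inner_sub_left]
  calc ⟪∇ f z - ∇ f x, y - x⟫ ≤ ‖∇ f z - ∇ f x‖ * ‖y - x‖ := real_inner_le_norm _ _
    _ ≤ L * ‖z - x‖ * ‖y - x‖ := by gcongr; exact hLip z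
    _ = L * s * ‖y - x‖ ^ 2 := by rw [hzx]; ring

theorem le_add_inner_gradient_add_norm_sq {f : E → ℝ} (hf : Differentiable ℝ f) {L : ℝ} {x : E}
    (hLip : ∀ z, ‖∇ f z - ∇ f x‖ ≤ L * ‖z - x‖) (y : E) :
    f y ≤ f x + ⟪∇ f x, y - x⟫ + L / 2 * ‖y - x‖ ^ 2 := by
  have hderiv (s : ℝ) := hasDerivAt_comp_lineMap_of_differentiableAt (hf (AffineMap.lineMap x y s))
  have hderiv_model (s : ℝ) : HasDerivAt
      (fun s : ℝ => f x + s * ⟪∇ f x, y - x⟫ + L / 2 * s ^ 2 * ‖y - x‖ ^ 2)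
      (⟪∇ f x, y - x⟫ + L * s * ‖y - x‖ ^ 2) s := by
    have hlinear := ((hasDerivAt_id s).mul_const ⟪∇ f x, y - x⟫).const_add (f x)
    have hquadratic := ((hasDerivAt_pow 2 s).const_mul (L / 2)).mul_const (‖y - x‖ ^ 2)
    refine (hlinear.add hquadratic).congr_deriv ?_
    push_cast
    ring
  have hle := image_le_of_deriv_right_le_deriv_boundary
    (fun s _ => (hderiv s).continuousAt.continuousWithinAt)
    (fun s _ => (hderiv s).hasDerivWithinAt) (by simp)
    (fun s _ => (hderiv_model s).continuousAt.continuousWithinAt)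
    (fun s _ => (hderiv_model s).hasDerivWithinAt)
    (fun s hs => inner_gradient_lineMap_le hLip y hs.1)
    (Set.right_mem_Icc.2 (zero_le_one (α := ℝ)))
  simpa using hle

theorem gradient_comp_linearIsometryEquiv (f : E' → ℝ) (e : E ≃ₗᵢ[ℝ] E') (x : E) :
    ∇ (f ∘ e) x = e.symm (∇ f (e x)) := by
  refine ext_inner_right ℝ fun v => ?_
  have hfderiv : fderiv ℝ (f ∘ e) x = (fderiv ℝ f (e x)).comp (e : E →L[ℝ] E') :=
    e.toContinuousLinearEquiv.comp_right_fderiv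
  rw [← e.inner_map_map (e.symm _), e.apply_symm_apply, gradient, gradient, hfderiv]
  simp

theorem norm_gradient_comp_linearIsometryEquiv_sub_le {f : E' → ℝ} {L : ℝ}
    (hLip : ∀ x y, ‖∇ f x - ∇ f y‖ ≤ L * ‖x - y‖) (e : E ≃ₗᵢ[ℝ] E') (x y : E) :
    ‖∇ (f ∘ e) x - ∇ (f ∘ e) y‖ ≤ L * ‖x - y‖ := by
  simpa only [gradient_comp_linearIsometryEquiv, ← map_sub, LinearIsometryEquiv.norm_map]
    using hLip (e x) (e y)

end LipschitzGradient

section ProximalStep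

variable {E F : Type*} [NormedAddCommGroup E] [InnerProductSpace ℝ E]
  [NormedAddCommGroup F] [InnerProductSpace ℝ F]

/-- The variable-splitting objective `f (W, γ) + r ξ + (β / 2) ‖γ - ξ‖²` on Hilbert spaces, which
relaxes `f (W, γ) + r γ` by a copy `ξ` of `γ`. The pair `(W, γ)` lives in the `L²` product. -/
def splitObjective (f : WithLp 2 (E × F) → ℝ) (r : F → ℝ) (β : ℝ) (W : E) (γ ξ : F) : ℝ :=
  f (WithLp.toLp 2 (W, γ)) + r ξ + β / 2 * ‖γ - ξ‖ ^ 2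

variable [CompleteSpace E] [CompleteSpace F] {f : WithLp 2 (E × F) → ℝ} {L : ℝ}

theorem splitObjective_sub_le (hf : Differentiable ℝ f) {W : E} {γ : F}
    (hLip : ∀ z, ‖∇ f z - ∇ f (WithLp.toLp 2 (W, γ))‖ ≤ L * ‖z - WithLp.toLp 2 (W, γ)‖)
    (r : F → ℝ) (β : ℝ) (W' : E) (γ' ξ : F) :
    splitObjective f r β W' γ' ξ - splitObjective f r β W γ ξ ≤
      ⟪(∇ f (WithLp.toLp 2 (W, γ))).fst, W' - W⟫ +
        ⟪(∇ f (WithLp.toLp 2 (W, γ))).snd + β • (γ - ξ), γ' - γ⟫ +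
        L / 2 * (‖W' - W‖ ^ 2 + ‖γ' - γ‖ ^ 2) + β / 2 * ‖γ' - γ‖ ^ 2 := by
  have hmodel := le_add_inner_gradient_add_norm_sq hf hLip (WithLp.toLp 2 (W', γ'))
  have hcoupling : ‖γ' - ξ‖ ^ 2 = ‖γ - ξ‖ ^ 2 + 2 * ⟪γ - ξ, γ' - γ⟫ + ‖γ' - γ‖ ^ 2 := by
    rw [← norm_add_sq_real, add_comm, sub_add_sub_cancel]
  rw [WithLp.prod_inner_apply, WithLp.prod_norm_sq_eq_of_L2] at hmodel
  simp only [← WithLp.toLp_sub, Prod.mk_sub_mk, WithLp.toLp_fst, WithLp.toLp_snd,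
    WithLp.ofLp_fst, WithLp.ofLp_snd] at hmodel
  rw [splitObjective, splitObjective, hcoupling, inner_add_left, real_inner_smul_left]
  linarith

theorem first_sufficient_descent_general {α β : ℝ} (hα : α ≠ 0) (hαβ : α + β ≠ 0)
    (hf : Differentiable ℝ f) (hLip : ∀ x y, ‖∇ f x - ∇ f y‖ ≤ L * ‖x - y‖) (r : F → ℝ)
    {W W' : E} {γ γ' ξ : F}
    (hW : W' = W - (1 / α) • (∇ f (WithLp.toLp 2 (W, γ))).fst)
    (hγ : γ' = (1 / (α + β)) • (α • γ + β • ξ) -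
      (1 / (α + β)) • (∇ f (WithLp.toLp 2 (W, γ))).snd) :
    splitObjective f r β W' γ' ξ - splitObjective f r β W γ ξ ≤
      (L - 2 * α) / 2 * (‖W' - W‖ ^ 2 + ‖γ' - γ‖ ^ 2) - β / 2 * ‖γ' - γ‖ ^ 2 := by
  have hmodel := splitObjective_sub_le hf (fun z => hLip z (WithLp.toLp 2 (W, γ))) r β W' γ' ξ
  have hslope_W : (∇ f (WithLp.toLp 2 (W, γ))).fst = -α • (W' - W) := by
    rw [hW, sub_sub_cancel_left, neg_smul_neg, smul_smul, mul_one_div_cancel hα, one_smul]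
  have hslope_γ : (∇ f (WithLp.toLp 2 (W, γ))).snd + β • (γ - ξ) = -(α + β) • (γ' - γ) := by
    have hγ_scaled : (α + β) • γ' = α • γ + β • ξ - (∇ f (WithLp.toLp 2 (W, γ))).snd := by
      rw [hγ, ← smul_sub, smul_smul, mul_one_div_cancel hαβ, one_smul]
    rw [neg_smul, smul_sub (α + β), hγ_scaled]
    module
  rw [hslope_W, hslope_γ, real_inner_smul_left, real_inner_smul_left, real_inner_self_eq_norm_sq,
    real_inner_self_eq_norm_sq] at hmodel
  linarith

end ProximalStep

section Euclidean

variable {n c : ℕ}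

/-- Concatenation of coordinates as an isometry from the `L²` product; it identifies the block
gradients `gradW` and `gradG` with the two components of a gradient on the product. -/
def concatIsometry (n c : ℕ) :
    WithLp 2 (EuclideanSpace ℝ (Fin n) × EuclideanSpace ℝ (Fin c)) ≃ₗᵢ[ℝ]
      EuclideanSpace ℝ (Fin n ⊕ Fin c) :=
  (PiLp.sumPiLpEquivProdLpPiLp 2 fun _ => ℝ).symm

theorem concatIsometry_toLp (W : EuclideanSpace ℝ (Fin n)) (γ : EuclideanSpace ℝ (Fin c)) :
    concatIsometry n c (WithLp.toLp 2 (W, γ)) = pairWγ W γ := by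
  ext (i | j) <;> rfl

variable (Lt : EuclideanSpace ℝ (Fin n ⊕ Fin c) → ℝ) (W : EuclideanSpace ℝ (Fin n))
  (γ : EuclideanSpace ℝ (Fin c))

theorem gradW_eq_fst_gradient :
    gradW Lt W γ = (∇ (Lt ∘ concatIsometry n c) (WithLp.toLp 2 (W, γ))).fst := by
  rw [gradient_comp_linearIsometryEquiv, concatIsometry_toLp]
  rfl

theorem gradG_eq_snd_gradient :
    gradG Lt W γ = (∇ (Lt ∘ concatIsometry n c) (WithLp.toLp 2 (W, γ))).snd := by
  rw [gradient_comp_linearIsometryEquiv, concatIsometry_toLp]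
  rfl

theorem objF_eq_splitObjective (lam β : ℝ) (ξ : EuclideanSpace ℝ (Fin c)) :
    objF Lt lam β W γ ξ =
      splitObjective (Lt ∘ concatIsometry n c) (fun ξ => lam * ∑ i, |ξ i|) β W γ ξ := by
  rw [objF, splitObjective, Function.comp_apply, concatIsometry_toLp]

end Euclidean

/-- (First sufficient descent inequality, step (24).) -/
theorem first_sufficient_descent
    (n c : ℕ) (hn : 0 < n) (hc : 0 < c)
    (L lam α β : ℝ) (hL : 0 < L) (hlam : 0 < lam) (hα : 0 < α) (hβ : 0 < β)
    (Lt : EuclideanSpace ℝ (Fin n ⊕ Fin c) → ℝ)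
    (hdiff : Differentiable ℝ Lt)
    (hLip : ∀ x y, ‖gradient Lt x - gradient Lt y‖ ≤ L * ‖x - y‖)
    (W : ℕ → EuclideanSpace ℝ (Fin n)) (γ ξ : ℕ → EuclideanSpace ℝ (Fin c))
    (hW : ∀ t, W (t + 1) = W t - (1 / α) • gradW Lt (W t) (γ t))
    (hγ : ∀ t, γ (t + 1) =
      (1 / (α + β)) • (α • γ t + β • ξ t) - (1 / (α + β)) • gradG Lt (W t) (γ t)) :
    ∀ t : ℕ,
      objF Lt lam β (W (t + 1)) (γ (t + 1)) (ξ t) - objF Lt lam β (W t) (γ t) (ξ t) ≤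
        (L - 2 * α) / 2 * (‖W (t + 1) - W t‖ ^ 2 + ‖γ (t + 1) - γ t‖ ^ 2) := by
  intro t
  simp only [gradW_eq_fst_gradient, gradG_eq_snd_gradient, objF_eq_splitObjective] at hW hγ ⊢
  exact (first_sufficient_descent_general hα.ne' (by positivity)
    (hdiff.comp (concatIsometry n c).differentiable)
    (norm_gradient_comp_linearIsometryEquiv_sub_le hLip _) _ (hW t) (hγ t)).trans
    (sub_le_self _ (by positivity))
end
end
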